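/- arXiv:2310.17628 — 2 statements merged into one kernel-verified Lean document; each statement's English description precedes it below -/
import Mathlib

section
/- Let K be a field with a nonarchimedean multiplicative absolute value |·|, and let (D̄(aₙ,rₙ))ₙ and (D̄(bₙ,sₙ))ₙ (with all rₙ, sₙ > 0) be two nested decreasing sequences of closed disks that are equivalent, meaning: for every n there is N with D̄(b_N,s_N) ⊆ D̄(aₙ,rₙ), and for every n there is N with D̄(a_N,r_N) ⊆ D̄(bₙ,sₙ). Then for every polynomial f ∈ K[y], infₙ ‖f‖_{ζ(aₙ,rₙ)} = infₙ ‖f‖_{ζ(bₙ,sₙ)}; that is, equivalent nested sequences of closed disks define the same Type IV norm. -/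
/-- A nonarchimedean multiplicative absolute value on a commutative ring. -/
def IsNAAbsValue {R : Type*} [CommRing R] (v : R → ℝ) : Prop :=
  (∀ x, 0 ≤ v x) ∧ (∀ x, v x = 0 ↔ x = 0) ∧ (∀ x y, v (x * y) = v x * v y) ∧
    (∀ x y, v (x + y) ≤ max (v x) (v y))


theorem na_one {K : Type*} [Field K] {v : K → ℝ} (h : IsNAAbsValue v) : v 1 = 1 := by
  obtain ⟨h0, hz, hm, ha⟩ := h
  have h1 : v 1 ≠ 0 := fun h => one_ne_zero ((hz 1).1 h)
  have h2 := hm 1 1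
  rw [mul_one] at h2
  exact mul_left_cancel₀ h1 (by rw [← h2, mul_one])

theorem na_neg {K : Type*} [Field K] {v : K → ℝ} (h : IsNAAbsValue v) (x : K) :
    v (-x) = v x := by
  have h1 := na_one h
  obtain ⟨h0, hz, hm, ha⟩ := h
  have h2 : v (-1) * v (-1) = 1 := by rw [← hm]; simpa using h1
  have h3 : v (-1) = 1 := by nlinarith [h0 (-1)]
  rw [← neg_one_mul, hm, h3, one_mul]

theorem na_nat {K : Type*} [Field K] {v : K → ℝ} (h : IsNAAbsValue v) (n : ℕ) :
    v (n : K) ≤ 1 := by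
  induction n with
  | zero => rw [Nat.cast_zero, (h.2.1 0).2 rfl]; exact zero_le_one
  | succ k ih =>
    rw [Nat.cast_succ]
    exact (h.2.2.2 _ _).trans (max_le ih (na_one h).le)

theorem na_pow {K : Type*} [Field K] {v : K → ℝ} (h : IsNAAbsValue v) (x : K) (n : ℕ) :
    v (x ^ n) = v x ^ n := by
  induction n with
  | zero => simpa using na_one h
  | succ k ih => rw [pow_succ, pow_succ, h.2.2.1, ih]

theorem na_bdd {K : Type*} [Field K] {v : K → ℝ} (h : IsNAAbsValue v) (g : Polynomial K)
    (r : ℝ) : BddAbove (Set.range fun i : ℕ => v (g.coeff i) * r ^ i) := by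
  have : (Set.range fun i : ℕ => v (g.coeff i) * r ^ i) ⊆
      insert 0 (Set.image (fun i : ℕ => v (g.coeff i) * r ^ i) (g.support : Set ℕ)) := by
    rintro _ ⟨i, rfl⟩
    by_cases hi : g.coeff i = 0
    · left
      simp [hi, (h.2.1 0).2 rfl]
    · right
      exact ⟨i, by simpa using hi, rfl⟩
  exact (((g.support.finite_toSet.image _).insert 0).subset this).bddAbove

theorem gauss_mono {K : Type*} [Field K] {v : K → ℝ} (h : IsNAAbsValue v) (f : Polynomial K)
    (a b : K) (r s : ℝ) (hs : 0 < s) (hab : v (a - b) ≤ r) (hsr : s ≤ r) :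
    (⨆ i : ℕ, v ((Polynomial.taylor b f).coeff i) * s ^ i) ≤
      ⨆ i : ℕ, v ((Polynomial.taylor a f).coeff i) * r ^ i := by
  have hc : v (b - a) ≤ r := by rw [← neg_sub, na_neg h]; exact hab
  have ht : Polynomial.taylor b f = Polynomial.taylor (b - a) (Polynomial.taylor a f) := by
    rw [Polynomial.taylor_taylor]; congr 1; ring_nf
  rw [ht]
  generalize Polynomial.taylor a f = g
  generalize b - a = c at hc
  have hb := na_bdd h g r
  have hr : 0 < r := hs.trans_le hsr
  refine ciSup_le fun i => ?_
  set M := ⨆ i : ℕ, v (g.coeff i) * r ^ i with hM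
  have hle : ∀ i, v (g.coeff i) * r ^ i ≤ M := fun i => le_ciSup hb i
  have hM0 : 0 ≤ M := (mul_nonneg (h.1 _) (pow_nonneg hr.le 0)).trans (hle 0)
  rw [Polynomial.taylor_coeff, Polynomial.eval_eq_sum_range]
  refine Finset.sum_induction _ (fun x => v x * s ^ i ≤ M) ?_ ?_ ?_
  · intro x y hx hy
    have := h.2.2.2 x y
    have hp : 0 ≤ s ^ i := by positivity
    refine (mul_le_mul_of_nonneg_right this hp).trans ?_
    rcases max_choice (v x) (v y) with e | e <;> rw [e] <;> assumption
  · simpa [(h.2.1 0).2 rfl] using hM0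
  · intro k _
    rw [Polynomial.hasseDeriv_coeff, h.2.2.1, h.2.2.1, na_pow h]
    have h1 := na_nat h ((k + i).choose i)
    have h2 : v c ^ k ≤ r ^ k := pow_le_pow_left₀ (h.1 _) hc k
    have h3 : s ^ i ≤ r ^ i := pow_le_pow_left₀ hs.le hsr i
    have e1 := h.1 (g.coeff (k + i))
    have e2 := h.1 c
    have e3 := h.1 (((k + i).choose i : ℕ) : K)
    calc _ ≤ 1 * v (g.coeff (k + i)) * r ^ k * r ^ i := by gcongr
      _ = v (g.coeff (k + i)) * r ^ (k + i) := by ring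
      _ ≤ M := hle _

theorem gauss_inf {K : Type*} [Field K] {v : K → ℝ} (h : IsNAAbsValue v) (f : Polynomial K)
    (a b : ℕ → K) (r s : ℕ → ℝ) (hs : ∀ n, 0 < s n)
    (hab : ∀ n, ∃ N, v (a n - b N) ≤ r n ∧ s N ≤ r n) :
    (⨅ n : ℕ, ⨆ i : ℕ, v ((Polynomial.taylor (b n) f).coeff i) * s n ^ i) ≤
      ⨅ n : ℕ, ⨆ i : ℕ, v ((Polynomial.taylor (a n) f).coeff i) * r n ^ i := by
  refine le_ciInf fun n => ?_
  obtain ⟨N, h1, h2⟩ := hab n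
  refine (ciInf_le ?_ N).trans (gauss_mono h f _ _ _ _ (hs N) h1 h2)
  refine ⟨0, ?_⟩
  rintro _ ⟨m, rfl⟩
  exact Real.iSup_nonneg fun i => mul_nonneg (h.1 _) (pow_nonneg (hs m).le i)

/-- Equivalent nested decreasing sequences of closed disks define the same Type IV norm:
if for every `n` there is `N` with `D̄(b_N, s_N) ⊆ D̄(aₙ, rₙ)` (i.e. `|aₙ − b_N| ≤ rₙ` and
`s_N ≤ rₙ`) and vice versa, then for every polynomial `f` the infima of the Gauss norms
along the two sequences agree. -/
theorem stmt9 {K : Type*} [Field K] (abv : K → ℝ) (habv : IsNAAbsValue abv)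
    (a b : ℕ → K) (r s : ℕ → ℝ) (hr : ∀ n, 0 < r n) (hs : ∀ n, 0 < s n)
    (hnesta : ∀ n, abv (a n - a (n + 1)) ≤ r n) (hnestr : ∀ n, r (n + 1) ≤ r n)
    (hnestb : ∀ n, abv (b n - b (n + 1)) ≤ s n) (hnests : ∀ n, s (n + 1) ≤ s n)
    (hab : ∀ n, ∃ N, abv (a n - b N) ≤ r n ∧ s N ≤ r n)
    (hba : ∀ n, ∃ N, abv (b n - a N) ≤ s n ∧ r N ≤ s n) :
    ∀ f : Polynomial K,
      (⨅ n : ℕ, ⨆ i : ℕ, abv ((Polynomial.taylor (a n) f).coeff i) * r n ^ i)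
        = ⨅ n : ℕ, ⨆ i : ℕ, abv ((Polynomial.taylor (b n) f).coeff i) * s n ^ i := by
  intro f
  exact le_antisymm (gauss_inf habv f b a s r hr hba) (gauss_inf habv f a b r s hs hab)
end

section
/- Let K be a complete, algebraically closed field with a nonarchimedean multiplicative absolute value |·|. Let a ∈ K, r > 0, and let (cₙ)ₙ ⊂ K satisfy |cₙ| rⁿ → 0, so that f(b) := Σₙ cₙ (b−a)ⁿ converges for every b in the closed disk D̄(a,r). Suppose cₙ ≠ 0 for some n ≥ 1, and let d be the largest index n ≥ 1 such that |cₙ| rⁿ = max_{m ≥ 1} |c_m| r^m (the Weierstrass degree of f − c₀ on D̄(a,r)). Then the image of the closed disk is again a closed disk: f(D̄(a,r)) = D̄(c₀, |c_d|·r^d). -/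
open Polynomial in
/-- Products of linear factors with all roots of norm `> ρ` have dominant constant term. -/
lemma aux_prod {K : Type*} [NormedField K] [IsUltrametricDist K] (ρ : ℝ) (hρ : 0 ≤ ρ)
    (s : Multiset K) (hs : ∀ β ∈ s, ρ < ‖β‖) :
    0 < ‖((s.map (fun β => X - C β)).prod).coeff 0‖ ∧ ∀ n : ℕ, 1 ≤ n →
    ‖((s.map (fun β => X - C β)).prod).coeff n‖ * ρ ^ n
      < ‖((s.map (fun β => X - C β)).prod).coeff 0‖ := by
  induction s using Multiset.induction_on with
  | empty =>
    refine ⟨by simp, fun n hn => ?_⟩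
    have : n ≠ 0 := by omega
    simp [coeff_one, this]
  | cons β t ih =>
    obtain ⟨h0, h1⟩ := ih (fun b hb => hs b (Multiset.mem_cons_of_mem hb))
    have hβ := hs β (Multiset.mem_cons_self β t)
    have hβ0 : 0 < ‖β‖ := lt_of_le_of_lt hρ hβ
    rw [Multiset.map_cons, Multiset.prod_cons]
    set R := (t.map (fun β => X - C β)).prod with hR
    have e0 : ‖((X - C β) * R).coeff 0‖ = ‖β‖ * ‖R.coeff 0‖ := by
      simp [mul_coeff_zero]
    rw [e0]
    refine ⟨by positivity, ?_⟩
    intro n hn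
    obtain ⟨m, rfl⟩ : ∃ m, n = m + 1 := ⟨n - 1, by omega⟩
    have hle : ‖R.coeff m‖ * ρ ^ m ≤ ‖R.coeff 0‖ := by
      rcases Nat.eq_zero_or_pos m with rfl | hm
      · simp
      · exact (h1 m hm).le
    have e1 : ((X - C β) * R).coeff (m + 1) = R.coeff m + -(β * R.coeff (m + 1)) := by
      rw [sub_mul, coeff_sub, coeff_X_mul, coeff_C_mul, sub_eq_add_neg]
    have h2 : ‖R.coeff m‖ * ρ ^ (m + 1) < ‖β‖ * ‖R.coeff 0‖ := by
      calc ‖R.coeff m‖ * ρ ^ (m + 1) = ρ * (‖R.coeff m‖ * ρ ^ m) := by ring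
        _ ≤ ρ * ‖R.coeff 0‖ := by gcongr
        _ < _ := by gcongr
    have h3 : ‖β * R.coeff (m + 1)‖ * ρ ^ (m + 1) < ‖β‖ * ‖R.coeff 0‖ := by
      rw [norm_mul, mul_assoc]
      have := h1 (m + 1) hn
      gcongr
    rw [e1]
    have h4 := IsUltrametricDist.norm_add_le_max (R.coeff m) (-(β * R.coeff (m + 1)))
    rw [norm_neg] at h4
    rcases le_max_iff.1 h4 with h | h
    · exact lt_of_le_of_lt (by gcongr) h2
    · exact lt_of_le_of_lt (by gcongr) h3

open Polynomial in
/-- Existence of a small root. -/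
lemma aux_root {K : Type*} [NormedField K] [IsUltrametricDist K] [IsAlgClosed K]
    (Q : K[X]) (d : ℕ) (hd : 1 ≤ d) (hq : Q.coeff d ≠ 0) :
    ∃ β : K, Q.eval β = 0 ∧ ‖β‖ ^ d * ‖Q.coeff d‖ ≤ ‖Q.coeff 0‖ := by
  by_contra hcon
  push Not at hcon
  have hQ : Q ≠ 0 := by rintro rfl; simp at hq
  have hqd : 0 < ‖Q.coeff d‖ := norm_pos_iff.2 hq
  have hd0 : d ≠ 0 := by omega
  set ρ : ℝ := (‖Q.coeff 0‖ / ‖Q.coeff d‖) ^ ((d : ℝ)⁻¹) with hρ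
  have hρ0 : 0 ≤ ρ := by positivity
  have hρd : ρ ^ d = ‖Q.coeff 0‖ / ‖Q.coeff d‖ :=
    Real.rpow_inv_natCast_pow (by positivity) hd0
  have key := aux_prod ρ hρ0 Q.roots (fun β hβ => by
    have h := hcon β (by simpa using (mem_roots hQ).1 hβ)
    refine lt_of_pow_lt_pow_left₀ d (norm_nonneg _) ?_
    rw [hρd, div_lt_iff₀ hqd]
    exact h)
  have hsp := (IsAlgClosed.splits Q).eq_prod_roots
  have hk := key.2 d hd
  have hl : 0 < ‖Q.leadingCoeff‖ := norm_pos_iff.2 (leadingCoeff_ne_zero.2 hQ)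
  have c1 : ∀ n, ‖Q.coeff n‖ = ‖Q.leadingCoeff‖ *
      ‖((Q.roots.map (fun β => X - C β)).prod).coeff n‖ := by
    intro n
    conv_lhs => rw [hsp]
    rw [coeff_C_mul, norm_mul]
  have : ‖Q.coeff d‖ * ρ ^ d < ‖Q.coeff 0‖ := by
    rw [c1 d, c1 0, mul_assoc]
    gcongr
  rw [hρd, mul_div_cancel₀ _ hqd.ne'] at this
  exact lt_irrefl _ this

open Polynomial in
/-- Approximate roots in the disk are near a genuine root in the disk. -/
lemma aux_near {K : Type*} [NormedField K] [IsUltrametricDist K] [IsAlgClosed K]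
    (P : K[X]) (r : ℝ) (hr : 0 < r) (d : ℕ) (hd : 1 ≤ d) (hq : P.coeff d ≠ 0)
    (hmax : ∀ m, ‖P.coeff m‖ * r ^ m ≤ ‖P.coeff d‖ * r ^ d)
    (hlt : ∀ m, d < m → ‖P.coeff m‖ * r ^ m < ‖P.coeff d‖ * r ^ d)
    (x : K) (hx : ‖x‖ ≤ r) :
    ∃ α : K, ‖α‖ ≤ r ∧ P.eval α = 0 ∧ ‖α - x‖ ^ d * ‖P.coeff d‖ ≤ ‖P.eval x‖ := by
  have hqd : 0 < ‖P.coeff d‖ := norm_pos_iff.2 hq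
  have hd0 : d ≠ 0 := by omega
  have hev : ‖P.eval x‖ ≤ ‖P.coeff d‖ * r ^ d := by
    rw [eval_eq_sum_range]
    refine IsUltrametricDist.norm_sum_le_of_forall_le_of_nonneg (by positivity) fun i _ => ?_
    rw [norm_mul, norm_pow]
    refine le_trans ?_ (hmax i)
    gcongr
  have hc : ‖(taylor x P).coeff d‖ = ‖P.coeff d‖ := by
    rw [taylor_coeff, eval_eq_sum_range, Finset.sum_range_succ']
    simp only [hasseDeriv_coeff, zero_add, Nat.choose_self, Nat.cast_one, one_mul, pow_zero,
      mul_one]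
    obtain ⟨i, -, hi⟩ := IsUltrametricDist.exists_norm_finsetSum_le
      (Finset.range ((hasseDeriv d P).natDegree))
      (fun k => (((k + 1 + d).choose d : ℕ) : K) * P.coeff (k + 1 + d) * x ^ (k + 1))
    have hi2 : ‖(((i + 1 + d).choose d : ℕ) : K) * P.coeff (i + 1 + d) * x ^ (i + 1)‖
        < ‖P.coeff d‖ := by
      rw [norm_mul, norm_mul, norm_pow]
      have h1 := IsUltrametricDist.norm_natCast_le_one K ((i + 1 + d).choose d)
      have h2 := hlt (i + 1 + d) (by omega)
      rw [pow_add, ← mul_assoc] at h2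
      have h3 := lt_of_mul_lt_mul_right h2 (by positivity)
      refine lt_of_le_of_lt ?_ h3
      calc _ ≤ 1 * ‖P.coeff (i + 1 + d)‖ * r ^ (i + 1) := by gcongr
        _ = _ := by ring
    have hlt' := lt_of_le_of_lt hi hi2
    rw [IsUltrametricDist.norm_add_eq_max_of_norm_ne_norm hlt'.ne]
    exact max_eq_right hlt'.le
  obtain ⟨β, hβ, hβ2⟩ := aux_root (taylor x P) d hd (by rw [← norm_pos_iff, hc]; exact hqd)
  rw [hc, taylor_coeff_zero] at hβ2
  rw [taylor_eval] at hβ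
  refine ⟨β + x, ?_, hβ, by simpa using hβ2⟩
  have hβr : ‖β‖ ≤ r := by
    refine le_of_pow_le_pow_left₀ hd0 hr.le ?_
    have := hβ2.trans hev
    rw [mul_comm] at this
    exact le_of_mul_le_mul_left this hqd
  exact (IsUltrametricDist.norm_add_le_max _ _).trans (max_le hβr hx)

/-- Lipschitz bound for monomials on the disk. -/
lemma aux_pow {K : Type*} [NormedField K] [IsUltrametricDist K] (r : ℝ) (hr : 0 < r)
    (x z : K) (hx : ‖x‖ ≤ r) (hz : ‖z‖ ≤ r) (n : ℕ) :
    ‖x ^ n - z ^ n‖ * r ≤ ‖x - z‖ * r ^ n := by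
  induction n with
  | zero => simp
  | succ n ih =>
    have e : x ^ (n + 1) - z ^ (n + 1) = x * (x ^ n - z ^ n) + (x - z) * z ^ n := by ring
    rw [e]
    have h1 : ‖x * (x ^ n - z ^ n)‖ * r ≤ ‖x - z‖ * r ^ (n + 1) := by
      rw [norm_mul, mul_assoc]
      calc _ ≤ r * (‖x - z‖ * r ^ n) := by gcongr
        _ = _ := by ring
    have h2 : ‖(x - z) * z ^ n‖ * r ≤ ‖x - z‖ * r ^ (n + 1) := by
      rw [norm_mul, norm_pow, pow_succ, ← mul_assoc]
      gcongr
    rcases le_max_iff.1 (IsUltrametricDist.norm_add_le_max (x * (x ^ n - z ^ n))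
      ((x - z) * z ^ n)) with h | h
    · exact le_trans (by gcongr) h1
    · exact le_trans (by gcongr) h2

/-- Surjectivity, centered at `0`. -/
lemma aux_surj {K : Type*} [NormedField K] [CompleteSpace K] [IsUltrametricDist K]
    [IsAlgClosed K] (r : ℝ) (hr : 0 < r) (c : ℕ → K)
    (hc : Filter.Tendsto (fun n => ‖c n‖ * r ^ n) Filter.atTop (nhds 0))
    (d : ℕ) (hd1 : 1 ≤ d) (hcd : c d ≠ 0)
    (hdmax : ∀ m : ℕ, 1 ≤ m → ‖c m‖ * r ^ m ≤ ‖c d‖ * r ^ d)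
    (hdlargest : ∀ m : ℕ, d < m → ‖c m‖ * r ^ m < ‖c d‖ * r ^ d)
    (hsum : ∀ x : K, ‖x‖ ≤ r → Summable (fun n => c n * x ^ n))
    (y : K) (hy : ‖y - c 0‖ ≤ ‖c d‖ * r ^ d) :
    ∃ x : K, ‖x‖ ≤ r ∧ ∑' n, c n * x ^ n = y := by
  have hcd0 : 0 < ‖c d‖ := norm_pos_iff.2 hcd
  have hd0 : d ≠ 0 := by omega
  let P : ℕ → Polynomial K := fun N =>
    ∑ n ∈ Finset.range (N + d + 1), Polynomial.monomial n (c n) - Polynomial.C y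
  have hPev : ∀ N x, (P N).eval x = ∑ n ∈ Finset.range (N + d + 1), c n * x ^ n - y := by
    intro N x
    simp [P, Polynomial.eval_finset_sum]
  have hPc : ∀ N m, 1 ≤ m → (P N).coeff m = if m < N + d + 1 then c m else 0 := by
    intro N m hm
    have : m ≠ 0 := by omega
    simp [P, Polynomial.coeff_monomial, Polynomial.coeff_C, this]
  have hPd : ∀ N, (P N).coeff d = c d := by
    intro N
    rw [hPc N d hd1, if_pos (by omega)]
  have hP0 : ∀ N, (P N).coeff 0 = c 0 - y := by
    intro N
    simp [P, Polynomial.coeff_monomial]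
  have near : ∀ N (x : K), ‖x‖ ≤ r → ∃ α : K, ‖α‖ ≤ r ∧ (P N).eval α = 0 ∧
      ‖α - x‖ ^ d * ‖c d‖ ≤ ‖(P N).eval x‖ := by
    intro N x hx
    have := aux_near (P N) r hr d hd1 (by rw [hPd]; exact hcd) (fun m => ?_) (fun m hm => ?_) x hx
    · rwa [hPd] at this
    · rw [hPd]
      rcases Nat.eq_zero_or_pos m with rfl | hm
      · rw [hP0, pow_zero, mul_one, norm_sub_rev]; exact hy
      · rw [hPc N m hm]
        split_ifs
        · exact hdmax m hm
        · rw [norm_zero, zero_mul]; positivity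
    · rw [hPd, hPc N m (by omega)]
      split_ifs
      · exact hdlargest m hm
      · rw [norm_zero, zero_mul]; positivity
  choose! F hF1 hF2 hF3 using near
  let u : ℕ → K := fun N => Nat.rec (F 0 0) (fun n x => F (n + 1) x) N
  have hu0 : u 0 = F 0 0 := rfl
  have hus : ∀ N, u (N + 1) = F (N + 1) (u N) := fun N => rfl
  have hur : ∀ N, ‖u N‖ ≤ r := by
    intro N
    induction N with
    | zero => exact hF1 0 0 (by simpa using hr.le)
    | succ n ih => rw [hus]; exact hF1 _ _ ih
  have huz : ∀ N, (P N).eval (u N) = 0 := by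
    intro N
    cases N with
    | zero => exact hF2 0 0 (by simpa using hr.le)
    | succ n => rw [hus]; exact hF2 _ _ (hur n)
  have hstep : ∀ N, ‖u (N + 1) - u N‖ ^ d ≤
      (‖c (N + d + 1)‖ * r ^ (N + d + 1)) / ‖c d‖ := by
    intro N
    rw [le_div_iff₀ hcd0]
    have h1 := hF3 (N + 1) (u N) (hur N)
    rw [← hus] at h1
    refine h1.trans ?_
    have h2 := huz N
    rw [hPev] at h2 ⊢
    rw [show N + 1 + d + 1 = (N + d + 1) + 1 by ring, Finset.sum_range_succ, add_sub_right_comm,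
      h2, zero_add, norm_mul, norm_pow]
    have := hur N
    gcongr
  have hlim : Filter.Tendsto (fun N => u (N + 1) - u N) Filter.atTop (nhds 0) := by
    rw [tendsto_zero_iff_norm_tendsto_zero]
    have h1 : Filter.Tendsto (fun N => (‖c (N + d + 1)‖ * r ^ (N + d + 1)) / ‖c d‖)
        Filter.atTop (nhds 0) := by
      have := (hc.comp (Filter.tendsto_add_atTop_nat (d + 1))).div_const ‖c d‖
      simpa [Function.comp_def, add_assoc] using this
    have h2 : Filter.Tendsto (fun N => ‖u (N + 1) - u N‖ ^ d) Filter.atTop (nhds 0) :=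
      squeeze_zero (fun N => by positivity) hstep h1
    have h3 := h2.rpow_const (p := (d : ℝ)⁻¹) (Or.inr (by positivity))
    rw [Real.zero_rpow (by positivity)] at h3
    refine h3.congr fun N => ?_
    exact Real.pow_rpow_inv_natCast (norm_nonneg _) hd0
  have hcau : CauchySeq u := NonarchimedeanAddGroup.cauchySeq_of_tendsto_sub_nhds_zero hlim
  obtain ⟨x, hx⟩ := cauchySeq_tendsto_of_complete hcau
  have hxr : ‖x‖ ≤ r := le_of_tendsto hx.norm (Filter.Eventually.of_forall hur)
  refine ⟨x, hxr, ?_⟩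
  have hS : Filter.Tendsto (fun N => ∑ n ∈ Finset.range (N + d + 1), c n * x ^ n)
      Filter.atTop (nhds (∑' n, c n * x ^ n)) := by
    have := (hsum x hxr).hasSum.tendsto_sum_nat.comp (Filter.tendsto_add_atTop_nat (d + 1))
    simpa [Function.comp_def, add_assoc] using this
  have hdiff : ∀ N, ‖∑ n ∈ Finset.range (N + d + 1), c n * x ^ n - y‖ ≤
      ‖x - u N‖ * (‖c d‖ * r ^ d / r) := by
    intro N
    have h2 := huz N
    rw [hPev, sub_eq_zero] at h2
    conv_lhs => rw [← h2]
    rw [← Finset.sum_sub_distrib]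
    refine IsUltrametricDist.norm_sum_le_of_forall_le_of_nonneg (by positivity) fun i _ => ?_
    rw [← mul_sub, norm_mul]
    rcases Nat.eq_zero_or_pos i with rfl | hi
    · simp; positivity
    · have h3 := aux_pow r hr x (u N) hxr (hur N) i
      have h4 := hdmax i hi
      rw [mul_div_assoc', le_div_iff₀ hr]
      calc _ = ‖c i‖ * (‖x ^ i - u N ^ i‖ * r) := by ring
        _ ≤ ‖c i‖ * (‖x - u N‖ * r ^ i) := by gcongr
        _ = ‖x - u N‖ * (‖c i‖ * r ^ i) := by ring
        _ ≤ _ := by gcongr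
  have hz : Filter.Tendsto (fun N => ‖x - u N‖ * (‖c d‖ * r ^ d / r)) Filter.atTop (nhds 0) := by
    have := ((tendsto_const_nhds (x := x)).sub hx).norm.mul_const (‖c d‖ * r ^ d / r)
    simpa using this
  have hS2 : Filter.Tendsto (fun N => ∑ n ∈ Finset.range (N + d + 1), c n * x ^ n)
      Filter.atTop (nhds y) := by
    rw [tendsto_iff_norm_sub_tendsto_zero]
    exact squeeze_zero (fun N => norm_nonneg _) hdiff hz
  exact tendsto_nhds_unique hS hS2

/-- Image of a closed disk under a convergent power series over a complete algebraically
closed nonarchimedean field: if some `cₙ ≠ 0` with `n ≥ 1` and `d` is the largest index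
`n ≥ 1` with `‖cₙ‖ rⁿ = max_{m ≥ 1} ‖c_m‖ r^m` (the Weierstrass degree of `f − c₀`),
then `f(D̄(a,r)) = D̄(c₀, ‖c_d‖ r^d)`. -/
theorem stmt16 {K : Type*} [NormedField K] [CompleteSpace K] [IsUltrametricDist K]
    [IsAlgClosed K]
    (a : K) (r : ℝ) (hr : 0 < r) (c : ℕ → K)
    (hc : Filter.Tendsto (fun n => ‖c n‖ * r ^ n) Filter.atTop (nhds 0))
    (hne : ∃ n : ℕ, 1 ≤ n ∧ c n ≠ 0)
    (d : ℕ) (hd1 : 1 ≤ d)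
    (hdmax : ∀ m : ℕ, 1 ≤ m → ‖c m‖ * r ^ m ≤ ‖c d‖ * r ^ d)
    (hdlargest : ∀ m : ℕ, d < m → ‖c m‖ * r ^ m < ‖c d‖ * r ^ d) :
    (fun b : K => ∑' n : ℕ, c n * (b - a) ^ n) '' Metric.closedBall a r
      = Metric.closedBall (c 0) (‖c d‖ * r ^ d) := by
  have hsum : ∀ x : K, ‖x‖ ≤ r → Summable (fun n => c n * x ^ n) := by
    intro x hx
    apply NonarchimedeanAddGroup.summable_of_tendsto_cofinite_zero
    rw [Nat.cofinite_eq_atTop, tendsto_zero_iff_norm_tendsto_zero]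
    refine squeeze_zero (fun n => norm_nonneg _) (fun n => ?_) hc
    rw [norm_mul, norm_pow]
    gcongr
  have hcd : c d ≠ 0 := by
    rintro h0
    obtain ⟨n, hn, hcn⟩ := hne
    have h := hdmax n hn
    rw [h0, norm_zero, zero_mul] at h
    have : 0 < ‖c n‖ * r ^ n := mul_pos (norm_pos_iff.2 hcn) (by positivity)
    linarith
  ext y
  simp only [Set.mem_image, Metric.mem_closedBall, dist_eq_norm]
  constructor
  · rintro ⟨b, hb, rfl⟩
    rw [(hsum _ hb).tsum_eq_zero_add, pow_zero, mul_one, add_sub_cancel_left]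
    refine IsUltrametricDist.norm_tsum_le_of_forall_le_of_nonneg (by positivity) fun i => ?_
    rw [norm_mul, norm_pow]
    refine le_trans ?_ (hdmax (i + 1) (by omega))
    gcongr
  · intro hy
    obtain ⟨x, hx, hxy⟩ := aux_surj r hr c hc d hd1 hcd hdmax hdlargest hsum y hy
    exact ⟨x + a, by simpa using hx, by simpa using hxy⟩
end
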